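/- arXiv:2601.18715 — 7 statements merged into one kernel-verified Lean document; each statement's English description precedes it below -/
import Mathlib

section
/- Let S be a finite nonempty set of positive integers and let v_S be the sink-subtraction nim-value function of S. Then the nim-sequence of S is eventually periodic: there exist a natural number N and a positive integer p such that v_S(x + p) = v_S(x) for every x ≥ N. -/
/-- The minimum excludant of a finite set of naturals. -/
noncomputable def mex (A : Finset ℕ) : ℕ := sInf {n : ℕ | n ∉ A}

/-- The sink-subtraction nim-value function: `sinkVal S 0 = 0`, and for `x ≥ 1`,
`sinkVal S x = mex { sinkVal S (x ∸ s) : s ∈ S }` (when every `s ∈ S` is positive,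
since `(x+1) - s = x - (s-1)` in truncated subtraction). -/
noncomputable def sinkVal (S : Finset ℕ) : ℕ → ℕ
  | 0 => 0
  | x + 1 => mex (S.image fun s => sinkVal S (x - (s - 1)))
termination_by x => x
decreasing_by omega

/-!
The nim values of `S` are bounded by `#S`, and from `max S` on, each of them is determined by the
`max S` values preceding it. By the pigeonhole principle two windows of that length agree, and from
there on the sequence repeats itself.
-/

section Recurrence

variable {α : Type*} {f : ℕ → α}

theorem exists_lt_forall_add_eq_of_finite_range (hf : (Set.range f).Finite) (d : ℕ) :
    ∃ a b, a < b ∧ ∀ i < d, f (a + i) = f (b + i) := by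
  have hwindows : {w : Fin d → α | ∀ i, w i ∈ Set.range f}.Finite := Set.Finite.pi' fun _ => hf
  have hmem (x : ℕ) : (fun i : Fin d => f (x + i)) ∈ {w : Fin d → α | ∀ i, w i ∈ Set.range f} :=
    fun i => Set.mem_range_self (x + i)
  obtain ⟨a, b, hab, heq⟩ := hwindows.exists_lt_map_eq_of_forall_mem hmem
  exact ⟨a, b, hab, fun i hi => congrFun heq ⟨i, hi⟩⟩

theorem forall_add_eq_of_forall_lt_add_eq {d : ℕ}
    (hrec : ∀ a b, (∀ i < d, f (a + i) = f (b + i)) → f (a + d) = f (b + d))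
    {a b : ℕ} (hab : ∀ i < d, f (a + i) = f (b + i)) (k : ℕ) : f (a + k) = f (b + k) := by
  induction k using Nat.strong_induction_on with
  | _ k ih =>
    obtain hk | hk := lt_or_ge k d
    · exact hab k hk
    · obtain ⟨j, rfl⟩ := Nat.exists_eq_add_of_le' hk
      have hwindow : ∀ i < d, f (a + j + i) = f (b + j + i) := fun i hi => by
        simpa only [add_assoc] using ih (j + i) (by lia)
      simpa only [add_assoc] using hrec (a + j) (b + j) hwindow

theorem exists_eventually_periodic_of_finite_range {d : ℕ} (hf : (Set.range f).Finite)
    (hrec : ∀ a b, (∀ i < d, f (a + i) = f (b + i)) → f (a + d) = f (b + d)) :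
    ∃ N p, 0 < p ∧ ∀ x, N ≤ x → f (x + p) = f x := by
  obtain ⟨a, b, hlt, hab⟩ := exists_lt_forall_add_eq_of_finite_range hf d
  refine ⟨a, b - a, Nat.sub_pos_of_lt hlt, fun x hx => ?_⟩
  calc f (x + (b - a)) = f (b + (x - a)) := congrArg f (by lia)
    _ = f (a + (x - a)) := (forall_add_eq_of_forall_lt_add_eq hrec hab (x - a)).symm
    _ = f x := congrArg f (Nat.add_sub_cancel' hx)

end Recurrence

theorem mem_of_lt_mex {A : Finset ℕ} {n : ℕ} (hn : n < mex A) : n ∈ A :=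
  not_not.mp (Nat.notMem_of_lt_sInf hn)

theorem mex_le_card (A : Finset ℕ) : mex A ≤ A.card := by
  have hsub : Finset.range (mex A) ⊆ A := fun n hn => mem_of_lt_mex (Finset.mem_range.mp hn)
  simpa only [Finset.card_range] using Finset.card_le_card hsub

theorem sinkVal_le_card (S : Finset ℕ) (x : ℕ) : sinkVal S x ≤ S.card := by
  cases x with
  | zero => simp only [sinkVal, Nat.zero_le]
  | succ x =>
    rw [sinkVal]
    exact (mex_le_card _).trans Finset.card_image_le

theorem finite_range_sinkVal (S : Finset ℕ) : (Set.range (sinkVal S)).Finite :=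
  (Set.finite_Iic S.card).subset (Set.range_subset_iff.mpr (sinkVal_le_card S))

theorem sinkVal_eq_mex {S : Finset ℕ} (hpos : ∀ s ∈ S, 0 < s) {x : ℕ} (hx : 0 < x) :
    sinkVal S x = mex (S.image fun s => sinkVal S (x - s)) := by
  obtain ⟨y, rfl⟩ := Nat.exists_eq_add_one.mpr hx
  rw [sinkVal]
  refine congrArg mex (Finset.image_congr fun s hs => congrArg (sinkVal S) ?_)
  have := hpos s hs
  lia

theorem sinkVal_add_congr {S : Finset ℕ} (hpos : ∀ s ∈ S, 0 < s) {d : ℕ} (hd : 0 < d)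
    (hS : ∀ s ∈ S, s ≤ d) (a b : ℕ)
    (hab : ∀ i < d, sinkVal S (a + i) = sinkVal S (b + i)) :
    sinkVal S (a + d) = sinkVal S (b + d) := by
  rw [sinkVal_eq_mex hpos (Nat.add_pos_right a hd), sinkVal_eq_mex hpos (Nat.add_pos_right b hd)]
  refine congrArg mex (Finset.image_congr fun s hs => ?_)
  simpa only [Nat.add_sub_assoc (hS s hs)] using hab (d - s) (Nat.sub_lt hd (hpos s hs))

theorem stmt0 (S : Finset ℕ) (hne : S.Nonempty) (hpos : ∀ s ∈ S, 0 < s) :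
    ∃ (N p : ℕ), 0 < p ∧ ∀ x : ℕ, N ≤ x → sinkVal S (x + p) = sinkVal S x := by
  have hmax : 0 < S.max' hne := hpos _ (S.max'_mem hne)
  exact exists_eventually_periodic_of_finite_range (finite_range_sinkVal S)
    (sinkVal_add_congr hpos hmax S.le_max')
end

section
/- Let S be a finite nonempty set of positive integers with maximum element max S, and let v_S be the sink-subtraction nim-value function of S. Then there exist a natural number N and a positive integer p with p ≤ (|S| + 1)^(max S) and N ≤ max S + (|S| + 1)^(max S) such that v_S(x + p) = v_S(x) for every x ≥ N. -/
/-! Since `mex A ≤ #A`, the values of `sinkVal S` lie in `{0, …, #S}`, and once `M` bounds `S` each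
value is a function of the preceding `M`. Among the first `(#S + 1) ^ M + 1` windows of length `M`
two coincide, and from then on the sequence repeats with their distance as a period. -/

section Recurrence

variable {α : Type*} {u : ℕ → α} {k : ℕ}

/-- The sequence `u` satisfies an autonomous recurrence of order `k`: every term is a function of
the `k` terms before it. The function is left implicit; all that is required is that equal windows
of length `k` have equal successors. -/
def SatisfiesRecurrence (k : ℕ) (u : ℕ → α) : Prop :=
  ∀ i j, (∀ m < k, u (i + m) = u (j + m)) → u (i + k) = u (j + k)

theorem SatisfiesRecurrence.eq_of_window_eq (hu : SatisfiesRecurrence k u) {i j : ℕ}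
    (hij : ∀ m < k, u (i + m) = u (j + m)) (n : ℕ) : u (i + n) = u (j + n) := by
  induction n using Nat.strong_induction_on with
  | _ n ih =>
    obtain hn | hkn := lt_or_ge n k
    · exact hij n hn
    · obtain ⟨d, rfl⟩ := Nat.exists_eq_add_of_le' hkn
      have window_eq : ∀ m < k, u (i + d + m) = u (j + d + m) := fun m hm => by
        simpa only [add_assoc] using ih (d + m) (by omega)
      simpa only [add_assoc] using hu (i + d) (j + d) window_eq

theorem exists_lt_window_eq {T : Finset α} (hT : ∀ n, u n ∈ T) (k : ℕ) :
    ∃ i j, i < j ∧ j ≤ T.card ^ k ∧ ∀ m < k, u (i + m) = u (j + m) := by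
  let window (i : ℕ) (m : Fin k) : α := u (i + m)
  have card_lt : (Fintype.piFinset fun _ : Fin k => T).card <
      (Finset.range (T.card ^ k + 1)).card := by
    rw [Fintype.card_piFinset_const, Finset.card_range]
    exact Nat.lt_succ_self _
  have mapsTo : ∀ i ∈ Finset.range (T.card ^ k + 1),
      window i ∈ Fintype.piFinset fun _ : Fin k => T :=
    fun i _ => Fintype.mem_piFinset.2 fun m => hT (i + m)
  obtain ⟨i, hi, j, hj, hne, heq⟩ :=
    Finset.exists_ne_map_eq_of_card_lt_of_maps_to card_lt mapsTo
  have window_eq : ∀ m < k, u (i + m) = u (j + m) := fun m hm => congrFun heq ⟨m, hm⟩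
  obtain hij | hji := hne.lt_or_gt
  · exact ⟨i, j, hij, Finset.mem_range_succ_iff.1 hj, window_eq⟩
  · exact ⟨j, i, hji, Finset.mem_range_succ_iff.1 hi, fun m hm => (window_eq m hm).symm⟩

theorem SatisfiesRecurrence.exists_eventually_periodic (hu : SatisfiesRecurrence k u)
    {T : Finset α} (hT : ∀ n, u n ∈ T) :
    ∃ N p, 0 < p ∧ N + p ≤ T.card ^ k ∧ ∀ x, N ≤ x → u (x + p) = u x := by
  obtain ⟨i, j, hij, hj, window_eq⟩ := exists_lt_window_eq hT k
  obtain ⟨p, rfl⟩ := Nat.exists_eq_add_of_le hij.le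
  refine ⟨i, p, by omega, hj, fun x hx => ?_⟩
  obtain ⟨n, rfl⟩ := Nat.exists_eq_add_of_le hx
  rw [add_right_comm]
  exact (hu.eq_of_window_eq window_eq n).symm

end Recurrence

theorem satisfiesRecurrence_sinkVal {S : Finset ℕ} {M : ℕ} (hM : 0 < M) (hS : ∀ s ∈ S, s ≤ M) :
    SatisfiesRecurrence M (sinkVal S) := by
  intro i j hij
  obtain ⟨m, rfl⟩ := Nat.exists_eq_add_one.2 hM
  rw [← add_assoc, ← add_assoc, sinkVal, sinkVal]
  refine congrArg mex (Finset.image_congr fun s hs => ?_)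
  have hsm : s - 1 ≤ m := Nat.sub_le_of_le_add (hS s hs)
  simpa only [Nat.add_sub_assoc hsm] using hij (m - (s - 1)) (by omega)

theorem stmt1 (S : Finset ℕ) (hne : S.Nonempty) (hpos : ∀ s ∈ S, 0 < s) :
    ∃ (N p : ℕ), 0 < p ∧ p ≤ (S.card + 1) ^ (S.max' hne) ∧
      N ≤ S.max' hne + (S.card + 1) ^ (S.max' hne) ∧
      ∀ x : ℕ, N ≤ x → sinkVal S (x + p) = sinkVal S x := by
  have recurrence : SatisfiesRecurrence (S.max' hne) (sinkVal S) :=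
    satisfiesRecurrence_sinkVal (hpos _ (S.max'_mem hne)) (S.le_max')
  have bounded : ∀ n, sinkVal S n ∈ Finset.range (S.card + 1) :=
    fun n => Finset.mem_range_succ_iff.2 (sinkVal_le_card S n)
  obtain ⟨N, p, hp, hNp, periodic⟩ := recurrence.exists_eventually_periodic bounded
  rw [Finset.card_range] at hNp
  exact ⟨N, p, hp, by omega, by omega, periodic⟩
end

section
/- Let S be a finite nonempty set of positive integers and let f : ℤ → ℕ be any function (an arbitrary assignment of forced nim-values to the non-positive integers). Define w : ℤ → ℕ by w(x) = f(x) for x ≤ 0 and, for x ≥ 1, w(x) = mex { w(x − s) : s ∈ S }. Then the sequence (w(x))_{x ≥ 1} is eventually periodic: there exist a natural number N ≥ 1 and a positive integer p such that w(x + p) = w(x) for every integer x ≥ N. -/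
theorem mex_image_le_card {ι : Type*} (S : Finset ι) (g : ι → ℕ) : mex (S.image g) ≤ S.card :=
  (mex_le_card _).trans Finset.card_image_le

section Window

variable {α : Type*} {u : ℕ → α} {m : ℕ}

/-- The window of length `m` of the sequence `u` starting at `n`, that is the block
`u n, …, u (n + m - 1)`. A recurrence of order `m`, expressing `u (n + m)` through the `m` preceding
terms, is encoded as `(fun n ↦ u (n + m)).FactorsThrough (window u m)`. -/
def window (u : ℕ → α) (m n : ℕ) : Fin m → α := fun i ↦ u (n + i)

theorem exists_lt_window_eq_s3 (hu : (Set.range u).Finite) (m : ℕ) :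
    ∃ a b, a < b ∧ window u m a = window u m b :=
  Set.Finite.exists_lt_map_eq_of_forall_mem (t := {v : Fin m → α | ∀ i, v i ∈ Set.range u})
    (fun n i ↦ Set.mem_range_self (n + i)) (Set.Finite.pi' fun _ ↦ hu)

theorem eq_add_of_window_eq (hrec : (fun n ↦ u (n + m)).FactorsThrough (window u m)) {a b : ℕ}
    (hab : window u m a = window u m b) (k : ℕ) : u (a + k) = u (b + k) := by
  induction k using Nat.strong_induction_on with
  | _ k ih =>
    rcases lt_or_ge k m with hk | hk
    · exact congrFun hab ⟨k, hk⟩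
    · obtain ⟨j, rfl⟩ := Nat.exists_eq_add_of_le' hk
      have hwindow : window u m (a + j) = window u m (b + j) := funext fun i ↦ by
        simpa only [window, add_assoc] using ih (j + i) (by omega)
      simpa only [add_assoc] using hrec hwindow

theorem exists_period_of_factorsThrough_window (hu : (Set.range u).Finite)
    (hrec : (fun n ↦ u (n + m)).FactorsThrough (window u m)) :
    ∃ N p, 0 < p ∧ ∀ n, N ≤ n → u (n + p) = u n := by
  obtain ⟨a, b, hlt, hab⟩ := exists_lt_window_eq_s3 hu m
  refine ⟨a, b - a, Nat.sub_pos_of_lt hlt, fun n hn ↦ ?_⟩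
  obtain ⟨k, rfl⟩ := Nat.exists_eq_add_of_le hn
  calc u (a + k + (b - a)) = u (b + k) := by congr 1; omega
    _ = u (a + k) := (eq_add_of_window_eq hrec hab k).symm

end Window

theorem factorsThrough_window_of_forall_sub {α : Type*} {S : Finset ℕ} {m : ℕ} {w : ℤ → α}
    (hS : S ⊆ Finset.Icc 1 m)
    (hw : ∀ x y : ℤ, 1 ≤ x → 1 ≤ y → (∀ s ∈ S, w (x - (s : ℤ)) = w (y - (s : ℤ))) → w x = w y) :
    (fun n : ℕ ↦ w ((n + m : ℕ) + 1)).FactorsThrough (window (fun n : ℕ ↦ w (n + 1)) m) := by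
  intro a b hab
  refine hw _ _ (by omega) (by omega) fun s hs ↦ ?_
  obtain ⟨hs_pos, hs_le⟩ := Finset.mem_Icc.1 (hS hs)
  have hshift (c : ℕ) : ((c + m : ℕ) + 1 - s : ℤ) = (c + (m - s) : ℕ) + 1 := by omega
  simpa only [hshift, window] using congrFun hab ⟨m - s, by omega⟩

theorem stmt3 (S : Finset ℕ) (hne : S.Nonempty) (hpos : ∀ s ∈ S, 0 < s)
    (f : ℤ → ℕ) (w : ℤ → ℕ)
    (hw0 : ∀ x : ℤ, x ≤ 0 → w x = f x)
    (hwrec : ∀ x : ℤ, 1 ≤ x → w x = mex (S.image fun s : ℕ => w (x - (s : ℤ)))) :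
    ∃ (N : ℤ) (p : ℤ), 1 ≤ N ∧ 0 < p ∧ ∀ x : ℤ, N ≤ x → w (x + p) = w x := by
  have hfinite : (Set.range fun n : ℕ ↦ w (n + 1)).Finite := by
    refine (Set.finite_Iic S.card).subset (Set.range_subset_iff.2 fun n ↦ ?_)
    exact (hwrec _ (by omega)).trans_le (mex_image_le_card _ _)
  have hS : S ⊆ Finset.Icc 1 (S.sup id) := fun s hs ↦
    Finset.mem_Icc.2 ⟨hpos s hs, Finset.le_sup (f := id) hs⟩
  have hlocal (x y : ℤ) (hx : 1 ≤ x) (hy : 1 ≤ y)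
      (hxy : ∀ s ∈ S, w (x - (s : ℤ)) = w (y - (s : ℤ))) : w x = w y := by
    rw [hwrec x hx, hwrec y hy, Finset.image_congr hxy]
  obtain ⟨N, p, hp, hper⟩ := exists_period_of_factorsThrough_window hfinite
    (factorsThrough_window_of_forall_sub hS hlocal)
  refine ⟨N + 1, p, by omega, by exact_mod_cast hp, fun x hx ↦ ?_⟩
  obtain ⟨n, rfl⟩ : ∃ n : ℕ, x = n + 1 := ⟨(x - 1).toNat, by omega⟩
  simpa only [Nat.cast_add, add_right_comm] using hper n (by omega)
end

section
/- Let m and δ be positive integers, let S = {m, m+δ, 2m+δ}, and let d = δ mod 2m. If d ≤ m, then for every x ≥ 1, v_S(x + 3m + 2δ − d) = v_S(x); that is, the nim-sequence of S is purely periodic with period 3m + 2δ − d. -/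
/-!
Extend the nim-sequence to a function `g` on `ℤ`, shifted so that `g x = v_S(x + 1)` for `x ≥ 0`.
Cut `ℤ` into the blocks `[km, (k + 1)m)`. On the interval `[-(m + δ), 2m + δ - d)`, of length
`3m + 2δ - d`, let `g` be `…, 3, 0, 3, 0` on the negative blocks and `1, 2, 1, 2, …` on the
nonnegative ones, and extend it periodically. As `2m` divides `δ - d`, the block parities of the
options of a position are determined by its own, which gives the mex recurrence of the subtraction
game without sink on all of `ℤ`. The sink replaces the options at negative positions by `0`, and
this leaves the mex unchanged. At a position in `[0, m + δ)` both longer moves are replaced, but the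
value `1` or `2` is already the mex of `0` and the value reached by the move `m`; at a position in
`[m + δ, 2m + δ)` only the longest move is replaced, and it leads to `[-m, 0)`, where `g` is `0`.
-/

theorem mex_eq_iff {A : Finset ℕ} {k : ℕ} : mex A = k ↔ k ∉ A ∧ ∀ j < k, j ∈ A := by
  have hne : {n : ℕ | n ∉ A}.Nonempty := Infinite.exists_notMem_finset A
  constructor
  · rintro rfl
    exact ⟨Nat.sInf_mem hne, fun j hj => not_not.mp (Nat.notMem_of_lt_sInf hj)⟩
  · rintro ⟨hk, hlt⟩
    exact IsLeast.csInf_eq ⟨hk, fun n hn => not_lt.mp fun hnk => hn (hlt n hnk)⟩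

theorem eq_mex_triple_iff {a b c k : ℕ} :
    k = mex {a, b, c} ↔ (k ≠ a ∧ k ≠ b ∧ k ≠ c) ∧ ∀ j < k, j = a ∨ j = b ∨ j = c := by
  simp [eq_comm (a := k), mex_eq_iff]

theorem sinkVal_zero (S : Finset ℕ) : sinkVal S 0 = 0 := by
  rw [sinkVal]

theorem sinkVal_succ {S : Finset ℕ} (hS : ∀ s ∈ S, 0 < s) (x : ℕ) :
    sinkVal S (x + 1) = mex (S.image fun s => sinkVal S (x + 1 - s)) := by
  rw [sinkVal]
  congr 1
  refine Finset.image_congr fun s hs => ?_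
  have hpos := hS s hs
  change sinkVal S (x - (s - 1)) = sinkVal S (x + 1 - s)
  congr 1
  omega

theorem sinkVal_succ_eq_of_mex_recurrence {S : Finset ℕ} (hS : ∀ s ∈ S, 0 < s) {g : ℕ → ℕ}
    (hg : ∀ x, g x = mex (S.image fun s => if s ≤ x then g (x - s) else 0)) (x : ℕ) :
    sinkVal S (x + 1) = g x := by
  induction x using Nat.strong_induction_on with
  | _ x ih =>
    rw [sinkVal_succ hS, hg]
    congr 1
    refine Finset.image_congr fun s hs => ?_
    have hpos := hS s hs
    change sinkVal S (x + 1 - s) = if s ≤ x then g (x - s) else 0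
    split_ifs with hsx
    · rw [Nat.sub_add_comm hsx, ih (x - s) (by omega)]
    · rw [Nat.sub_eq_zero_of_le (by omega), sinkVal_zero]

/-- The parity, `0` or `1`, of the index `k` of the block `[k * m, (k + 1) * m)` containing `z`. -/
def blockParity (m : ℕ) (z : ℤ) : ℕ := (z / m % 2).toNat

section BlockParity

variable {m : ℕ} {z : ℤ}

theorem blockParity_lt_two (m : ℕ) (z : ℤ) : blockParity m z < 2 := by
  unfold blockParity
  omega

theorem blockParity_sub_self (hm : 0 < m) (z : ℤ) :
    blockParity m (z - m) = 1 - blockParity m z := by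
  have hdiv : (z - m) / m = z / m - 1 := by
    rw [Int.sub_ediv_of_dvd _ dvd_rfl, Int.ediv_self (by omega)]
  unfold blockParity
  omega

theorem blockParity_add_of_dvd (hm : 0 < m) {c : ℤ} (hc : (2 * m : ℤ) ∣ c) (z : ℤ) :
    blockParity m (z + c) = blockParity m z := by
  obtain ⟨k, rfl⟩ := hc
  have hdiv : (z + 2 * m * k) / m = z / m + 2 * k := by
    rw [mul_right_comm, mul_comm _ (m : ℤ), Int.add_mul_ediv_left _ _ (by omega)]
  unfold blockParity
  omega

theorem blockParity_eq_zero (h0 : 0 ≤ z) (hz : z < m) : blockParity m z = 0 := by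
  simp [blockParity, Int.ediv_eq_zero_of_lt h0 hz]

theorem blockParity_eq_one (hlo : -m ≤ z) (hz : z < 0) : blockParity m z = 1 := by
  rw [← add_sub_cancel_right z (m : ℤ), blockParity_sub_self (by omega),
    blockParity_eq_zero (by omega) (by omega)]

end BlockParity

/-- The candidate for the nim-sequence of `{m, m + δ, 2 * m + δ}`, as a function on `ℤ` of period
`3 * m + 2 * δ - d`; its value at `x ≥ 0` is the nim-value of `x + 1`. Here `y` is the
representative of `z` modulo the period in `[-(m + δ), 2 * m + δ - d)`. -/
def nimPattern (m δ d : ℕ) (z : ℤ) : ℕ :=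
  let y := (z + (m + δ)) % (3 * m + 2 * δ - d) - (m + δ)
  if y < 0 then 3 * (1 - blockParity m y) else 1 + blockParity m y

/-- The mex of the values of `g` at the options of `z` in the subtraction game
`{m, m + δ, 2 * m + δ}` played on all of `ℤ`, without a sink. -/
noncomputable def optionMex (m δ : ℕ) (g : ℤ → ℕ) (z : ℤ) : ℕ :=
  mex {g (z - m), g (z - (m + δ)), g (z - (2 * m + δ))}

section NimPattern

variable {m δ d : ℕ} {z : ℤ}

theorem nimPattern_periodic (m δ d : ℕ) :
    Function.Periodic (nimPattern m δ d) (3 * m + 2 * δ - d) := by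
  intro z
  simp only [nimPattern, add_right_comm z _ (m + δ : ℤ), Int.add_emod_right]

theorem nimPattern_of_neg (hd : d ≤ m) (hlo : -(m + δ) ≤ z) (hz : z < 0) :
    nimPattern m δ d z = 3 * (1 - blockParity m z) := by
  have hmod : (z + (m + δ)) % (3 * m + 2 * δ - d) = z + (m + δ) :=
    Int.emod_eq_of_lt (by omega) (by omega)
  simp only [nimPattern, hmod, add_sub_cancel_right, if_pos hz]

theorem nimPattern_of_nonneg (hz : 0 ≤ z) (hhi : z < 2 * m + δ - d) :
    nimPattern m δ d z = 1 + blockParity m z := by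
  have hmod : (z + (m + δ)) % (3 * m + 2 * δ - d) = z + (m + δ) :=
    Int.emod_eq_of_lt (by omega) (by omega)
  simp only [nimPattern, hmod, add_sub_cancel_right, if_neg hz.not_gt]

theorem nimPattern_eq_zero (hd : d ≤ m) (hlo : -m ≤ z) (hz : z < 0) :
    nimPattern m δ d z = 0 := by
  rw [nimPattern_of_neg hd (by omega) hz, blockParity_eq_one hlo hz]

theorem nimPattern_of_lt (hm : 0 < m) (hdvd : (2 * m : ℤ) ∣ δ - d)
    (hlo : -(3 * m + 2 * δ - d) ≤ z) (hz : z < -(m + δ)) :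
    nimPattern m δ d z = 2 - blockParity m (z + d) := by
  have hc : (2 * m : ℤ) ∣ 2 * (δ - d) + 2 * (2 * m) :=
    dvd_add (hdvd.mul_left 2) (dvd_mul_left _ 2)
  have hparity : blockParity m (z + (3 * m + 2 * δ - d)) = 1 - blockParity m (z + d) := by
    rw [← blockParity_sub_self hm, ← blockParity_add_of_dvd hm hc (z + d - m)]
    congr 1
    ring
  have hlt := blockParity_lt_two m (z + d)
  rw [← nimPattern_periodic, nimPattern_of_nonneg (by omega) (by omega), hparity]
  omega

theorem nimPattern_sub_middle (hm : 0 < m) (hd : d ≤ m) (hdvd : (2 * m : ℤ) ∣ δ - d)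
    (hlo : -(m + δ) ≤ z) (hz : z < 0) :
    nimPattern m δ d (z - (m + δ)) = 1 + blockParity m z := by
  have hparity : blockParity m (z - (m + δ) + d) = 1 - blockParity m z := by
    rw [← blockParity_sub_self hm, ← blockParity_add_of_dvd hm hdvd]
    congr 1
    ring
  have hlt := blockParity_lt_two m z
  rw [nimPattern_of_lt hm hdvd (by omega) (by omega), hparity]
  omega

theorem nimPattern_sub_largest (hm : 0 < m) (hdvd : (2 * m : ℤ) ∣ δ - d)
    (hlo : -(m + δ) + d ≤ z) (hz : z < m) :
    nimPattern m δ d (z - (2 * m + δ)) = 2 - blockParity m z := by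
  have hparity : blockParity m (z - (2 * m + δ) + d) = blockParity m z := by
    rw [← blockParity_add_of_dvd hm (dvd_add hdvd (dvd_refl (2 * m : ℤ)))]
    congr 1
    ring
  rw [nimPattern_of_lt hm hdvd (by omega) (by omega), hparity]

theorem nimPattern_eq_optionMex_of_lt_neg (hm : 0 < m) (hd : d ≤ m) (hdvd : (2 * m : ℤ) ∣ δ - d)
    (hlo : -(m + δ) ≤ z) (hz : z < -δ) :
    nimPattern m δ d z = optionMex m δ (nimPattern m δ d) z := by
  have hdvd' : (2 * m : ℤ) ∣ δ - d + 2 * m := dvd_add hdvd dvd_rfl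
  have hsmallest : nimPattern m δ d (z - m) = 2 := by
    rw [nimPattern_of_lt hm hdvd (by omega) (by omega), ← blockParity_add_of_dvd hm hdvd',
      blockParity_eq_zero (by omega) (by omega)]
  rw [optionMex, nimPattern_of_neg hd hlo (by omega), hsmallest,
    nimPattern_sub_middle hm hd hdvd hlo (by omega), eq_mex_triple_iff]
  rcases lt_or_ge z (-(m + δ) + d) with hfar | hnear
  · have hblock : blockParity m z = 0 := by
      rw [← blockParity_add_of_dvd hm hdvd', blockParity_eq_zero (by omega) (by omega)]
    have hlargest : nimPattern m δ d (z - (2 * m + δ)) = 0 := by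
      rw [← nimPattern_periodic, nimPattern_eq_zero hd (by omega) (by omega)]
    constructor <;> omega
  · have hblock : blockParity m z = 1 := by
      rw [← blockParity_add_of_dvd hm hdvd, blockParity_eq_one (by omega) (by omega)]
    rw [nimPattern_sub_largest hm hdvd hnear (by omega)]
    constructor <;> omega

theorem nimPattern_eq_optionMex_of_neg_le (hm : 0 < m) (hd : d ≤ m) (hdvd : (2 * m : ℤ) ∣ δ - d)
    (hlo : -δ ≤ z) (hz : z < 0) :
    nimPattern m δ d z = optionMex m δ (nimPattern m δ d) z := by
  have hlt := blockParity_lt_two m z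
  rw [optionMex, nimPattern_of_neg hd (by omega) hz, nimPattern_of_neg hd (by omega) (by omega),
    blockParity_sub_self hm, nimPattern_sub_middle hm hd hdvd (by omega) hz,
    nimPattern_sub_largest hm hdvd (by omega) (by omega), eq_mex_triple_iff]
  constructor <;> omega

theorem nimPattern_eq_optionMex_of_nonneg (hm : 0 < m) (hd : d ≤ m) (hdvd : (2 * m : ℤ) ∣ δ - d)
    (hlo : 0 ≤ z) (hz : z < 2 * m + δ - d) :
    nimPattern m δ d z = optionMex m δ (nimPattern m δ d) z := by
  have hlt := blockParity_lt_two m z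
  have hsub := blockParity_sub_self hm z
  rw [optionMex, nimPattern_of_nonneg hlo hz, eq_mex_triple_iff]
  rcases lt_or_ge z m with hfirst | hm_le
  · rw [nimPattern_eq_zero hd (by omega) (by omega), nimPattern_of_neg hd (by omega) (by omega),
      nimPattern_sub_largest hm hdvd (by omega) hfirst, blockParity_eq_zero hlo hfirst]
    constructor <;> omega
  rw [nimPattern_of_nonneg (by omega) (by omega : z - m < _)]
  rcases lt_or_ge z (m + δ) with hmiddle | hlast
  · have hlt' := blockParity_lt_two m (z - (m + δ))
    have hsub' : blockParity m (z - (2 * m + δ)) = 1 - blockParity m (z - (m + δ)) := by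
      rw [← blockParity_sub_self hm]
      congr 1
      ring
    rw [nimPattern_of_neg hd (by omega) (by omega), nimPattern_of_neg hd (by omega) (by omega)]
    constructor <;> omega
  · have hblock : blockParity m (z - m) = 0 := by
      rw [← sub_add_cancel (z - m) (δ - d : ℤ), blockParity_add_of_dvd hm hdvd,
        blockParity_eq_zero (by omega) (by omega)]
    rw [hblock, nimPattern_of_nonneg (z := z - (m + δ)) (by omega) (by omega),
      nimPattern_eq_zero hd (z := z - (2 * m + δ)) (by omega) (by omega),
      blockParity_eq_zero (z := z - (m + δ)) (by omega) (by omega)]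
    constructor <;> omega

theorem nimPattern_eq_optionMex (hm : 0 < m) (hd : d ≤ m) (hdvd : (2 * m : ℤ) ∣ δ - d) (z : ℤ) :
    nimPattern m δ d z = optionMex m δ (nimPattern m δ d) z := by
  have hperiodic : Function.Periodic (fun z => nimPattern m δ d z =
      optionMex m δ (nimPattern m δ d) z) (3 * m + 2 * δ - d) := fun z => by
    simp only [optionMex, add_sub_right_comm z _ (_ : ℤ), nimPattern_periodic m δ d _]
  obtain ⟨y, ⟨hlo, hhi⟩, hy⟩ := hperiodic.exists_mem_Ico (by omega) z (-(m + δ))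
  refine hy.mpr ?_
  rcases lt_or_ge y (-δ) with hneg | hlo'
  · exact nimPattern_eq_optionMex_of_lt_neg hm hd hdvd hlo hneg
  rcases lt_or_ge y 0 with hneg | hnonneg
  · exact nimPattern_eq_optionMex_of_neg_le hm hd hdvd hlo' hneg
  · exact nimPattern_eq_optionMex_of_nonneg hm hd hdvd hnonneg (by omega)

theorem nimPattern_eq_mex_sink (hm : 0 < m) (hd : d ≤ m) (hdvd : (2 * m : ℤ) ∣ δ - d)
    (hz : 0 ≤ z) :
    nimPattern m δ d z = mex {if m ≤ z then nimPattern m δ d (z - m) else 0,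
      if m + δ ≤ z then nimPattern m δ d (z - (m + δ)) else 0,
      if 2 * m + δ ≤ z then nimPattern m δ d (z - (2 * m + δ)) else 0} := by
  rcases lt_or_ge z (m + δ) with hshort | hlong
  · have hlt := blockParity_lt_two m z
    rw [if_neg hshort.not_ge, if_neg (by omega : ¬2 * m + δ ≤ z),
      nimPattern_of_nonneg hz (by omega), eq_mex_triple_iff]
    split_ifs with hm_le
    · have hsub := blockParity_sub_self hm z
      rw [nimPattern_of_nonneg (by omega) (by omega : z - m < _)]
      constructor <;> omega
    · rw [blockParity_eq_zero hz (by omega)]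
      constructor <;> omega
  · rw [if_pos (by omega), if_pos hlong, nimPattern_eq_optionMex hm hd hdvd z, optionMex]
    split_ifs with hlargest
    · rfl
    · rw [nimPattern_eq_zero hd (z := z - (2 * m + δ)) (by omega) (by omega)]

theorem sinkVal_succ_eq_nimPattern (hm : 0 < m) (hd : d ≤ m) (hdvd : (2 * m : ℤ) ∣ δ - d)
    (x : ℕ) : sinkVal {m, m + δ, 2 * m + δ} (x + 1) = nimPattern m δ d x := by
  have hpos : ∀ s ∈ ({m, m + δ, 2 * m + δ} : Finset ℕ), 0 < s := by
    simp only [Finset.mem_insert, Finset.mem_singleton]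
    omega
  refine sinkVal_succ_eq_of_mex_recurrence (g := fun x => nimPattern m δ d x) hpos (fun x => ?_) x
  have hcast (s : ℕ) : (if s ≤ x then nimPattern m δ d ((x - s : ℕ) : ℤ) else 0) =
      if (s : ℤ) ≤ x then nimPattern m δ d (x - s) else 0 := by
    simp only [Nat.cast_le]
    split_ifs with hs
    · rw [Nat.cast_sub hs]
    · rfl
  simp only [hcast, Finset.image_insert, Finset.image_singleton]
  exact_mod_cast nimPattern_eq_mex_sink hm hd hdvd (Int.natCast_nonneg x)

end NimPattern

theorem stmt5 (m δ : ℕ) (hm : 0 < m) (hδ : 0 < δ)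
    (S : Finset ℕ) (hS : S = {m, m + δ, 2 * m + δ})
    (d : ℕ) (hd : d = δ % (2 * m)) (hdm : d ≤ m) :
    ∀ x : ℕ, 1 ≤ x → sinkVal S (x + (3 * m + 2 * δ - d)) = sinkVal S x := by
  intro x hx
  obtain ⟨y, rfl⟩ := Nat.exists_eq_add_of_le' hx
  have hdvd : (2 * m : ℤ) ∣ δ - d := by
    rw [hd]
    push_cast
    exact Int.dvd_self_sub_emod
  have hperiod : ((y + (3 * m + 2 * δ - d) : ℕ) : ℤ) = y + (3 * m + 2 * δ - d) := by omega
  rw [hS, add_right_comm, sinkVal_succ_eq_nimPattern hm hdm hdvd,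
    sinkVal_succ_eq_nimPattern hm hdm hdvd, hperiod, nimPattern_periodic]
end

section
/- Let m and δ be positive integers with d = δ mod 2m satisfying d ≤ m, and let S = {m, m+δ, 2m+δ}. Then for every integer r with 1 ≤ r ≤ m, v_S(2m + δ + r) = 0. (This is the factor 0^m of the period, occupying positions 2m + δ + 1 through 3m + δ.) -/
/-
A single move takes any position in `[1, max S]` to the sink, so all these positions have nonzero
value. From a position in `(max S, max S + min S]` every move lands in `[1, max S]`, so none
reaches value `0`.
-/

theorem mex_eq_zero_iff (A : Finset ℕ) : mex A = 0 ↔ 0 ∉ A :=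
  Nat.sInf_eq_zero.trans <| or_iff_left <|
    Set.Nonempty.ne_empty (Infinite.exists_notMem_finset A)

theorem sinkVal_succ_eq_zero_iff (S : Finset ℕ) (x : ℕ) :
    sinkVal S (x + 1) = 0 ↔ ∀ s ∈ S, sinkVal S (x - (s - 1)) ≠ 0 := by
  simp only [sinkVal, mex_eq_zero_iff, Finset.mem_image, not_exists, not_and, ne_eq]

theorem sinkVal_ne_zero_of_le_mem {S : Finset ℕ} {s x : ℕ} (hs : s ∈ S) (hx : 0 < x)
    (hxs : x ≤ s) : sinkVal S x ≠ 0 := by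
  obtain ⟨y, rfl⟩ := Nat.exists_eq_add_one.mpr hx
  intro hzero
  have move_to_sink : y - (s - 1) = 0 := by omega
  apply (sinkVal_succ_eq_zero_iff S y).mp hzero s hs
  rw [move_to_sink, sinkVal]

theorem stmt10_general {S : Finset ℕ} {a b x : ℕ} (ha : a ∈ lowerBounds (S : Set ℕ))
    (hb : IsGreatest (S : Set ℕ) b) (hbx : b < x) (hxab : x ≤ a + b) : sinkVal S x = 0 := by
  obtain ⟨y, rfl⟩ := Nat.exists_eq_add_one.mpr (Nat.zero_lt_of_lt hbx)
  refine (sinkVal_succ_eq_zero_iff S y).mpr fun s hs => ?_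
  have has : a ≤ s := ha hs
  have hsb : s ≤ b := hb.2 hs
  exact sinkVal_ne_zero_of_le_mem hb.1 (by omega) (by omega)

theorem stmt10 (m δ : ℕ) (hm : 0 < m) (hδ : 0 < δ)
    (S : Finset ℕ) (hS : S = {m, m + δ, 2 * m + δ})
    (d : ℕ) (hd : d = δ % (2 * m)) (hdm : d ≤ m) :
    ∀ r : ℕ, 1 ≤ r → r ≤ m → sinkVal S (2 * m + δ + r) = 0 := fun r hr hrm =>
  stmt10_general (a := m) (b := 2 * m + δ) (by grind [mem_lowerBounds])
    (by grind [IsGreatest, mem_upperBounds]) (by omega) (by omega)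
end

section
/- Let m and k be integers with 1 ≤ k < m, let g = gcd(m,k), M = m/g, and K = k/g. Then the map i ↦ (k·i) mod m is injective on {0, 1, …, M−1} and its image is exactly the set {g·j : 0 ≤ j ≤ M−1} of nonnegative multiples of g below m; consequently, exactly K indices i in {0, 1, …, M−1} satisfy (k·i) mod m ≥ m − k, and exactly M − K indices satisfy (k·i) mod m < m − k. -/
/-!
Write `g = gcd m k`. Cancelling `k` modulo `m` leaves a congruence modulo `m / g`, so
`i ↦ k * i % m` is injective on `range (m / g)`. Its values are multiples of `g` below `m`; there
are only `m / g` of these, so all are attained. Since `m - k` is itself a multiple of `g`, counting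
the residues on either side of it amounts to counting the multiples of `g` there.
-/

open Finset

theorem card_filter_comp_of_injOn {α β : Type*} [DecidableEq β] {s : Finset α} {f : α → β}
    (hf : Set.InjOn f s) (p : β → Prop) [DecidablePred p] :
    #{a ∈ s | p (f a)} = #{b ∈ s.image f | p b} := by
  rw [filter_image, card_image_of_injOn (hf.mono (filter_subset _ s))]

section MulMod

variable (m k : ℕ)

theorem injOn_mul_mod_range_div_gcd :
    Set.InjOn (fun i ↦ k * i % m) (range (m / m.gcd k)) := by
  rcases m.eq_zero_or_pos with rfl | hm
  · simp
  intro i hi j hj hij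
  have hmod : i ≡ j [MOD m / m.gcd k] := Nat.ModEq.cancel_left_div_gcd hm hij
  exact hmod.eq_of_lt_of_lt (mem_range.1 hi) (mem_range.1 hj)

theorem injOn_gcd_mul_range_div_gcd :
    Set.InjOn (fun j ↦ m.gcd k * j) (range (m / m.gcd k)) := by
  rcases (m.gcd k).eq_zero_or_pos with hg | hg
  · simp [hg]
  · exact (mul_right_injective₀ hg.ne').injOn

theorem image_mul_mod_range_div_gcd :
    (range (m / m.gcd k)).image (fun i ↦ k * i % m) =
      (range (m / m.gcd k)).image (fun j ↦ m.gcd k * j) := by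
  refine eq_of_subset_of_card_le (image_subset_iff.2 fun i hi ↦ ?_) ?_
  · have hm : 0 < m := Nat.pos_of_ne_zero (by rintro rfl; simp at hi)
    obtain ⟨j, hj⟩ : m.gcd k ∣ k * i % m :=
      (Nat.dvd_mod_iff (m.gcd_dvd_left k)).2 ((m.gcd_dvd_right k).mul_right i)
    have hlt : m.gcd k * j < m := hj ▸ Nat.mod_lt _ hm
    have hjlt : j < m / m.gcd k := (Nat.lt_div_iff_mul_lt' (m.gcd_dvd_left k) j).2 hlt
    exact mem_image.2 ⟨j, mem_range.2 hjlt, hj.symm⟩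
  · rw [card_image_of_injOn (injOn_mul_mod_range_div_gcd m k)]
    exact card_image_le

theorem card_filter_mul_mod_range_div_gcd (p : ℕ → Prop) [DecidablePred p] :
    #{i ∈ range (m / m.gcd k) | p (k * i % m)} =
      #{j ∈ range (m / m.gcd k) | p (m.gcd k * j)} := by
  rw [card_filter_comp_of_injOn (injOn_mul_mod_range_div_gcd m k), image_mul_mod_range_div_gcd,
    ← card_filter_comp_of_injOn (injOn_gcd_mul_range_div_gcd m k)]

theorem sub_eq_gcd_mul_sub_div_gcd : m - k = m.gcd k * (m / m.gcd k - k / m.gcd k) := by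
  rw [Nat.mul_sub, Nat.mul_div_cancel' (m.gcd_dvd_left k), Nat.mul_div_cancel' (m.gcd_dvd_right k)]

variable {m k} {t : ℕ}

theorem card_filter_mul_mod_lt_gcd_mul (ht : t ≤ m / m.gcd k) :
    #{i ∈ range (m / m.gcd k) | k * i % m < m.gcd k * t} = t := by
  have hfilter : {j ∈ range (m / m.gcd k) | m.gcd k * j < m.gcd k * t} = range t := by
    ext j
    rw [mem_filter, mem_range, mem_range]
    refine ⟨fun h ↦ lt_of_mul_lt_mul_left' h.2, fun hj ↦ ⟨hj.trans_le ht, ?_⟩⟩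
    have hg : 0 < m.gcd k := Nat.pos_of_ne_zero fun hg ↦ by rw [hg, Nat.div_zero] at ht; omega
    exact Nat.mul_lt_mul_of_pos_left hj hg
  rw [card_filter_mul_mod_range_div_gcd m k (· < m.gcd k * t), hfilter, card_range]

theorem card_filter_gcd_mul_le_mul_mod (ht : t ≤ m / m.gcd k) :
    #{i ∈ range (m / m.gcd k) | m.gcd k * t ≤ k * i % m} = m / m.gcd k - t := by
  have hsum := card_filter_add_card_filter_not (s := range (m / m.gcd k))
    (fun i ↦ k * i % m < m.gcd k * t)
  simp only [not_lt] at hsum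
  rw [card_filter_mul_mod_lt_gcd_mul ht, card_range] at hsum
  exact Nat.eq_sub_of_add_eq' hsum

end MulMod

theorem stmt16 (m k : ℕ) (hk : 1 ≤ k) (hkm : k < m)
    (g M K : ℕ) (hg : g = Nat.gcd m k) (hM : M = m / g) (hK : K = k / g) :
    (∀ i ∈ Finset.range M, ∀ j ∈ Finset.range M,
        (k * i) % m = (k * j) % m → i = j) ∧
    (Finset.range M).image (fun i => (k * i) % m) =
      (Finset.range M).image (fun j => g * j) ∧
    ((Finset.range M).filter (fun i => m - k ≤ (k * i) % m)).card = K ∧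
    ((Finset.range M).filter (fun i => (k * i) % m < m - k)).card = M - K := by
  subst hg hM hK
  have hKM : k / m.gcd k ≤ m / m.gcd k := Nat.div_le_div_right hkm.le
  refine ⟨fun i hi j hj hij ↦ injOn_mul_mod_range_div_gcd m k hi hj hij,
    image_mul_mod_range_div_gcd m k, ?_, ?_⟩
  · rw [sub_eq_gcd_mul_sub_div_gcd, card_filter_gcd_mul_le_mul_mod (Nat.sub_le _ _),
      Nat.sub_sub_self hKM]
  · rw [sub_eq_gcd_mul_sub_div_gcd, card_filter_mul_mod_lt_gcd_mul (Nat.sub_le _ _)]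
end

section
/- Let m and k be integers with 1 ≤ k < m, let g = gcd(m,k), M = m/g, and K = k/g. Define ℓ(i) = 4m + 2k if (k·i) mod m < m − k and ℓ(i) = 5m + 2k otherwise. Then the total length of one index cycle of the period word P(m,k), namely the sum of ℓ(i) over i = 0, 1, …, M−1, equals m·(4m + 3k)/g. -/
/-!
Passing from `k * i` to `k * (i + 1)` increases `k * i / m` by one when the residue `k * i % m` is
at least `m - k`, and leaves it unchanged otherwise. Hence the long blocks among the first `n` are
counted by `k * n / m`, and over the period `m / gcd m k` there are exactly `k / gcd m k` of them.
-/

open Finset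

theorem add_div_eq_add_ite_of_le {m k : ℕ} (hm : 0 < m) (hkm : k ≤ m) (x : ℕ) :
    (x + k) / m = x / m + if m - k ≤ x % m then 1 else 0 := by
  rcases hkm.eq_or_lt with rfl | hlt
  · simp [Nat.add_div_right x hm]
  · simp only [Nat.add_div hm, Nat.div_eq_of_lt hlt, Nat.mod_eq_of_lt hlt, add_zero,
      Nat.sub_le_iff_le_add]

theorem card_range_filter_le_mul_mod_eq_mul_div {m k : ℕ} (hm : 0 < m) (hkm : k ≤ m) (n : ℕ) :
    #{i ∈ range n | m - k ≤ k * i % m} = k * n / m := by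
  induction n with
  | zero => simp
  | succ n ih =>
    rw [card_filter] at ih ⊢
    rw [sum_range_succ, ih, Nat.mul_succ, add_div_eq_add_ite_of_le hm hkm]

theorem mul_div_gcd_div_eq_div_gcd {m : ℕ} (hm : 0 < m) (k : ℕ) :
    k * (m / m.gcd k) / m = k / m.gcd k := by
  rw [← Nat.mul_div_assoc k (Nat.gcd_dvd_left m k), mul_comm,
    Nat.mul_div_assoc m (Nat.gcd_dvd_right m k), Nat.mul_div_cancel_left _ hm]

theorem sum_ite_add_eq_card_nsmul {ι A : Type*} [AddCommMonoid A] (s : Finset ι) (p : ι → Prop)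
    [DecidablePred p] (a d : A) :
    ∑ i ∈ s, (if p i then a else a + d) = #s • a + #{i ∈ s | ¬p i} • d := by
  calc ∑ i ∈ s, (if p i then a else a + d)
      = ∑ i ∈ s, (a + if ¬p i then d else 0) :=
        sum_congr rfl fun i _ ↦ by by_cases h : p i <;> simp [h]
    _ = #s • a + #{i ∈ s | ¬p i} • d := by
        rw [sum_add_distrib, sum_const, ← sum_filter, sum_const]

theorem sum_range_div_gcd_ite_mul_mod_lt {A : Type*} [AddCommMonoid A] {m k : ℕ} (hm : 0 < m)
    (hkm : k ≤ m) (a d : A) :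
    ∑ i ∈ range (m / m.gcd k), (if k * i % m < m - k then a else a + d) =
      (m / m.gcd k) • a + (k / m.gcd k) • d := by
  simp only [sum_ite_add_eq_card_nsmul, card_range, not_lt,
    card_range_filter_le_mul_mod_eq_mul_div hm hkm, mul_div_gcd_div_eq_div_gcd hm]

theorem stmt17 (m k : ℕ) (hk : 1 ≤ k) (hkm : k < m)
    (g M K : ℕ) (hg : g = Nat.gcd m k) (hM : M = m / g) (hK : K = k / g)
    (ℓ : ℕ → ℕ)
    (hℓ : ∀ i, ℓ i = if (k * i) % m < m - k then 4 * m + 2 * k else 5 * m + 2 * k) :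
    ∑ i ∈ Finset.range M, ℓ i = m * (4 * m + 3 * k) / g := by
  have hm : 0 < m := Nat.zero_lt_of_lt hkm
  have hgpos : 0 < g := hg ▸ Nat.gcd_pos_of_pos_left k hm
  have hgM : g * M = m := hM ▸ Nat.mul_div_cancel' (hg ▸ Nat.gcd_dvd_left m k)
  have hgK : g * K = k := hK ▸ Nat.mul_div_cancel' (hg ▸ Nat.gcd_dvd_right m k)
  have long_eq : 5 * m + 2 * k = (4 * m + 2 * k) + m := by ring
  have hsum : ∑ i ∈ range M, ℓ i = M * (4 * m + 2 * k) + K * m := by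
    subst hM hK hg
    simp only [hℓ, long_eq, sum_range_div_gcd_ite_mul_mod_lt hm hkm.le, smul_eq_mul]
  rw [hsum]
  refine (Nat.div_eq_of_eq_mul_right hgpos ?_).symm
  calc m * (4 * m + 3 * k) = m * (4 * m + 2 * k) + k * m := by ring
    _ = g * M * (4 * m + 2 * k) + g * K * m := by rw [hgM, hgK]
    _ = g * (M * (4 * m + 2 * k) + K * m) := by ring
end
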